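/- arXiv:1810.09158 — 3 statements merged into one kernel-verified Lean document; each statement's English description precedes it below -/
import Mathlib

section
/- Let X be a set and let μ be a metric filtration on X. Then the normalization μ̃ of μ is a pseudometric on X; that is, for all x, y, z ∈ X: μ̃(x,x) = 0, μ̃(x,y) = μ̃(y,x), μ̃(x,y) ≥ 0, and μ̃(x,z) ≤ μ̃(x,y) + μ̃(y,z). -/
/-!
Every diagonal value satisfies `μ y y ≤ μ x y`, because `μ y y ≤ μ y x ⊔ μ x y`. In the triangle
inequality, split `μ x y + μ y z` into its supremum, which bounds `μ x z`, and its infimum, which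
is thus at least `μ y y`. What remains is the inequality `a ⊓ b + b ⊓ c ≤ a ⊓ c + b` between the
diagonal values `a`, `b`, `c`.
-/

section Normalization

variable {X G : Type*}

/-- The analogue of a metric filtration for values in any join-semilattice. Unlike for an
ultrametric, the diagonal values are arbitrary. -/
structure IsSymmUltrametric [SemilatticeSup G] (μ : X → X → G) : Prop where
  symm : ∀ x y, μ x y = μ y x
  le_sup : ∀ x y z, μ x z ≤ μ x y ⊔ μ y z

/-- The normalization `μ̃` of `μ`, which measures `μ x y` relative to the smaller of the two
diagonal values. -/
def normalization [Min G] [Sub G] (μ : X → X → G) (x y : X) : G :=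
  μ x y - μ x x ⊓ μ y y

theorem normalization_self [SemilatticeInf G] [AddGroup G] (μ : X → X → G) (x : X) :
    normalization μ x x = 0 := by
  rw [normalization, inf_idem, sub_self]

theorem normalization_comm [SemilatticeInf G] [Sub G] {μ : X → X → G}
    (hsymm : ∀ x y, μ x y = μ y x) (x y : X) :
    normalization μ x y = normalization μ y x := by
  rw [normalization, normalization, hsymm x y, inf_comm]

theorem inf_add_inf_le_inf_add [Lattice G] [AddCommGroup G] [AddLeftMono G] (a b c : G) :
    a ⊓ b + b ⊓ c ≤ a ⊓ c + b :=
  calc a ⊓ b + b ⊓ c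
      = (a ⊓ b) ⊓ (b ⊓ c) + (a ⊓ b ⊔ b ⊓ c) := (inf_add_sup _ _).symm
    _ ≤ a ⊓ c + b :=
      add_le_add (inf_le_inf inf_le_left inf_le_right) (sup_le inf_le_right inf_le_left)

namespace IsSymmUltrametric

theorem self_le_left [SemilatticeSup G] {μ : X → X → G} (hμ : IsSymmUltrametric μ) (x y : X) :
    μ x x ≤ μ x y := by
  simpa only [hμ.symm y x, sup_idem] using hμ.le_sup x y x

theorem self_le_right [SemilatticeSup G] {μ : X → X → G} (hμ : IsSymmUltrametric μ) (x y : X) :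
    μ y y ≤ μ x y :=
  (hμ.self_le_left y x).trans_eq (hμ.symm y x)

theorem normalization_nonneg [Lattice G] [AddGroup G] [AddRightMono G] {μ : X → X → G}
    (hμ : IsSymmUltrametric μ) (x y : X) : 0 ≤ normalization μ x y :=
  sub_nonneg.mpr (inf_le_left.trans (hμ.self_le_left x y))

theorem normalization_triangle [Lattice G] [AddCommGroup G] [AddLeftMono G] {μ : X → X → G}
    (hμ : IsSymmUltrametric μ) (x y z : X) :
    normalization μ x z ≤ normalization μ x y + normalization μ y z := by
  have self_le_inf : μ y y ≤ μ x y ⊓ μ y z :=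
    le_inf (hμ.self_le_right x y) (hμ.self_le_left y z)
  simp only [normalization]
  rw [sub_add_sub_comm, sub_le_sub_iff]
  calc μ x z + (μ x x ⊓ μ y y + μ y y ⊓ μ z z)
      ≤ (μ x y ⊔ μ y z) + (μ x x ⊓ μ z z + μ y y) :=
        add_le_add (hμ.le_sup x y z) (inf_add_inf_le_inf_add _ _ _)
    _ ≤ (μ x y ⊔ μ y z) + (μ x x ⊓ μ z z + μ x y ⊓ μ y z) := by gcongr
    _ = (μ x y ⊓ μ y z + (μ x y ⊔ μ y z)) + μ x x ⊓ μ z z := by abel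
    _ = μ x y + μ y z + μ x x ⊓ μ z z := by rw [inf_add_sup]

end IsSymmUltrametric

theorem stmt_1_general [Lattice G] [AddCommGroup G] [AddLeftMono G] {μ : X → X → G}
    (hμ : IsSymmUltrametric μ) (x y z : X) :
    normalization μ x x = 0 ∧ normalization μ x y = normalization μ y x ∧
      0 ≤ normalization μ x y ∧
      normalization μ x z ≤ normalization μ x y + normalization μ y z :=
  ⟨normalization_self μ x, normalization_comm hμ.symm x y, hμ.normalization_nonneg x y,
    hμ.normalization_triangle x y z⟩

end Normalization

/-- If `μ` is a metric filtration on `X`, then its normalization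
`μ̃(x,y) := μ(x,y) − min{μ(x,x), μ(y,y)}` is a pseudometric on `X`:
it vanishes on the diagonal, is symmetric, nonnegative, and satisfies
the triangle inequality. -/
theorem stmt_1 {X : Type*} (μ : X → X → ℝ)
    (hnonneg : ∀ x y, 0 ≤ μ x y)
    (hsymm : ∀ x y, μ x y = μ y x)
    (hultra : ∀ x y z, μ x z ≤ max (μ x y) (μ y z))
    (μt : X → X → ℝ)
    (hμt : ∀ x y, μt x y = μ x y - min (μ x x) (μ y y)) :
    ∀ x y z, μt x x = 0 ∧ μt x y = μt y x ∧ 0 ≤ μt x y ∧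
      μt x z ≤ μt x y + μt y z := by
  obtain rfl : μt = normalization μ := funext₂ hμt
  exact stmt_1_general ⟨hsymm, hultra⟩
end

section
/- Let X be a path-connected topological space and let f : X → ℝ be continuous with f(p) ≥ 0 for all p ∈ X. For x, y ∈ X define μ(x,y) := inf{ sup_{t∈[0,1]} f(γ(t)) : γ : [0,1] → X continuous, γ(0) = x, γ(1) = y } (the infimum is over a nonempty set since X is path-connected, and each supremum is finite since [0,1] is compact and f∘γ is continuous). Then μ is a metric filtration on X: μ(x,y) ≥ 0, μ(x,y) = μ(y,x), and μ(x,z) ≤ max{μ(x,y), μ(y,z)} for all x, y, z ∈ X; moreover μ(x,x) = f(x) for every x ∈ X. -/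
/-- The supremum of `f` along a continuous path `γ` from `x` to `y`. -/
noncomputable def pathMax {X : Type*} [TopologicalSpace X] (f : X → ℝ)
    {x y : X} (γ : Path x y) : ℝ :=
  sSup (Set.range fun t => f (γ t))

/-!
Concatenating paths turns `pathMax` into a maximum, so two nearly optimal paths through `y` give
the ultrametric inequality; the value of `f` at an endpoint bounds `pathMax` from below, and the
constant path attains this bound when the endpoints agree.
-/

open Set

section

variable {X : Type*} [TopologicalSpace X] {f : X → ℝ} {x y z : X}

theorem pathMax_eq_sSup_image (f : X → ℝ) (γ : Path x y) : pathMax f γ = sSup (f '' range γ) :=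
  congrArg sSup (range_comp f γ)

theorem pathMax_refl (f : X → ℝ) (x : X) : pathMax f (Path.refl x) = f x := by
  simp [pathMax_eq_sSup_image]

theorem pathMax_symm (f : X → ℝ) (γ : Path x y) : pathMax f γ.symm = pathMax f γ := by
  simp only [pathMax_eq_sSup_image, Path.symm_range]

theorem pathMax_trans {γ : Path x y} {γ' : Path y z} (hγ : BddAbove (f '' range γ))
    (hγ' : BddAbove (f '' range γ')) :
    pathMax f (γ.trans γ') = max (pathMax f γ) (pathMax f γ') := by
  simp only [pathMax_eq_sSup_image, Path.trans_range, image_union]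
  exact csSup_union hγ ((range_nonempty γ).image f) hγ' ((range_nonempty γ').image f)

theorem source_le_pathMax {γ : Path x y} (hγ : BddAbove (f '' range γ)) : f x ≤ pathMax f γ := by
  rw [pathMax_eq_sSup_image]
  exact le_csSup hγ (mem_image_of_mem f γ.source_mem_range)

/-- The minimax value of `f` between `x` and `y`: the infimum of `pathMax f γ` over all paths `γ`
from `x` to `y`. It is the junk value `0` when there is no such path. -/
noncomputable def pathMinimax (f : X → ℝ) (x y : X) : ℝ :=
  ⨅ γ : Path x y, pathMax f γ

theorem pathMinimax_comm (f : X → ℝ) (x y : X) : pathMinimax f x y = pathMinimax f y x :=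
  Path.symm_bijective.surjective.iInf_congr Path.symm (pathMax_symm f)

/-- Boundedness above of `f` along every path, which makes each supremum `pathMax f γ` a genuine
one rather than the junk value `sSup s = 0` of an unbounded set. -/
def BddAboveAlongPaths (f : X → ℝ) : Prop :=
  ∀ ⦃x y : X⦄ (γ : Path x y), BddAbove (f '' range γ)

theorem bddAboveAlongPaths_of_continuous (hf : Continuous f) : BddAboveAlongPaths f :=
  fun _ _ γ => (isCompact_range γ.continuous).bddAbove_image hf.continuousOn

namespace BddAboveAlongPaths

theorem pathMinimax_le_pathMax (hf : BddAboveAlongPaths f) (γ : Path x y) :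
    pathMinimax f x y ≤ pathMax f γ :=
  ciInf_le ⟨f x, forall_mem_range.2 fun γ => source_le_pathMax (hf γ)⟩ γ

theorem source_le_pathMinimax (hf : BddAboveAlongPaths f) (hxy : Joined x y) :
    f x ≤ pathMinimax f x y :=
  have : Nonempty (Path x y) := hxy
  le_ciInf fun γ => source_le_pathMax (hf γ)

theorem pathMinimax_self (hf : BddAboveAlongPaths f) (x : X) : pathMinimax f x x = f x :=
  le_antisymm ((hf.pathMinimax_le_pathMax (Path.refl x)).trans_eq (pathMax_refl f x))
    (hf.source_le_pathMinimax (Joined.refl x))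

theorem pathMinimax_le_max (hf : BddAboveAlongPaths f) (hxy : Joined x y) (hyz : Joined y z) :
    pathMinimax f x z ≤ max (pathMinimax f x y) (pathMinimax f y z) := by
  have : Nonempty (Path x y) := hxy
  have : Nonempty (Path y z) := hyz
  by_contra! hlt
  obtain ⟨hlt_xy, hlt_yz⟩ := max_lt_iff.1 hlt
  obtain ⟨γ, hγ⟩ := exists_lt_of_ciInf_lt hlt_xy
  obtain ⟨γ', hγ'⟩ := exists_lt_of_ciInf_lt hlt_yz
  refine lt_irrefl (pathMinimax f x z) ?_
  calc
    pathMinimax f x z ≤ pathMax f (γ.trans γ') := hf.pathMinimax_le_pathMax _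
    _ = max (pathMax f γ) (pathMax f γ') := pathMax_trans (hf γ) (hf γ')
    _ < pathMinimax f x z := max_lt hγ hγ'

end BddAboveAlongPaths

end

theorem stmt_4_general {X : Type*} [TopologicalSpace X] {f : X → ℝ} (hf : BddAboveAlongPaths f) :
    (∀ x y, Joined x y → f x ≤ pathMinimax f x y) ∧
    (∀ x y, pathMinimax f x y = pathMinimax f y x) ∧
    (∀ x y z, Joined x y → Joined y z →
      pathMinimax f x z ≤ max (pathMinimax f x y) (pathMinimax f y z)) ∧
    (∀ x, pathMinimax f x x = f x) :=
  ⟨fun _ _ => hf.source_le_pathMinimax, pathMinimax_comm f,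
    fun _ _ _ => hf.pathMinimax_le_max, hf.pathMinimax_self⟩

/-- Let `X` be a path-connected topological space and `f : X → ℝ` continuous
and nonnegative.  Defining `μ(x,y)` as the infimum over continuous paths `γ`
from `x` to `y` of `sup_{t ∈ [0,1]} f(γ(t))`, the function `μ` is a metric
filtration on `X`: nonnegative, symmetric, satisfying the ultrametric
inequality, and with `μ(x,x) = f(x)` for every `x`. -/
theorem stmt_4 {X : Type*} [TopologicalSpace X] [PathConnectedSpace X]
    (f : X → ℝ) (hf_cont : Continuous f) (hf : ∀ p, 0 ≤ f p)
    (μ : X → X → ℝ)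
    (hμ : ∀ x y, μ x y = sInf {r : ℝ | ∃ γ : Path x y, pathMax f γ = r}) :
    (∀ x y, 0 ≤ μ x y) ∧
    (∀ x y, μ x y = μ y x) ∧
    (∀ x y z, μ x z ≤ max (μ x y) (μ y z)) ∧
    (∀ x, μ x x = f x) := by
  obtain rfl : μ = pathMinimax f := funext₂ hμ
  obtain ⟨source_le, comm, le_max, self⟩ :=
    stmt_4_general (bddAboveAlongPaths_of_continuous hf_cont)
  have joined := PathConnectedSpace.joined (X := X)
  exact ⟨fun x y => (hf x).trans (source_le x y (joined x y)), comm,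
    fun x y z => le_max x y z (joined x y) (joined y z), self⟩
end

section
/- For (i,j) ∈ ℤ × ℤ let R_{i,j} := {(m,n) ∈ ℤ × ℤ : m ≥ i and n ≥ j}; for a subset 𝒮 ⊆ ℤ × ℤ, its filtered hull is H(𝒮) := ⋃_{(i,j)∈𝒮} R_{i,j}, and 𝒮 is called a filtered shape if 𝒮 = H(𝒮). Call 𝒮 a sub-quotient shape if whenever (i,j), (m,n) ∈ 𝒮 with i ≤ m and j ≤ n, then every (p,q) with i ≤ p ≤ m and j ≤ q ≤ n also lies in 𝒮. Then: if 𝒮 is a sub-quotient shape, the set H(𝒮) \ 𝒮 is a filtered shape. -/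
/-- The upper-right quadrant `R_{i,j} = {(m,n) : m ≥ i, n ≥ j}` in `ℤ × ℤ`. -/
def Rset (i j : ℤ) : Set (ℤ × ℤ) := {p | i ≤ p.1 ∧ j ≤ p.2}

/-- The filtered hull `H(𝒮) = ⋃_{(i,j) ∈ 𝒮} R_{i,j}` of a subset of `ℤ × ℤ`. -/
def filteredHull (S : Set (ℤ × ℤ)) : Set (ℤ × ℤ) :=
  ⋃ p ∈ S, Rset p.1 p.2

/-- A subset of `ℤ × ℤ` is a filtered shape if it equals its filtered hull. -/
def IsFilteredShape (S : Set (ℤ × ℤ)) : Prop :=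
  S = filteredHull S

/-- A subset of `ℤ × ℤ` is a sub-quotient shape if whenever it contains two
comparable points, it contains the whole rectangle they span. -/
def IsSubQuotientShape (S : Set (ℤ × ℤ)) : Prop :=
  ∀ i j m n : ℤ, (i, j) ∈ S → (m, n) ∈ S → i ≤ m → j ≤ n →
    ∀ p q : ℤ, i ≤ p → p ≤ m → j ≤ q → q ≤ n → (p, q) ∈ S

/-! Hulls are upper closures, filtered shapes are upper sets and sub-quotient shapes are
order-connected sets. An order-connected set is the intersection of its upper and lower closures, so
removing it from its upper closure amounts to intersecting that closure with the complement of a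
lower set, which is again an upper set. -/

theorem filteredHull_eq_upperClosure (S : Set (ℤ × ℤ)) : filteredHull S = upperClosure S :=
  (coe_upperClosure S).symm

theorem isFilteredShape_iff_isUpperSet {S : Set (ℤ × ℤ)} :
    IsFilteredShape S ↔ IsUpperSet S := by
  rw [IsFilteredShape, filteredHull_eq_upperClosure, eq_comm, upperClosure_eq]

theorem isSubQuotientShape_iff_ordConnected {S : Set (ℤ × ℤ)} :
    IsSubQuotientShape S ↔ S.OrdConnected := by
  constructor
  · refine fun hS ↦ ⟨fun a ha b hb x ⟨hax, hxb⟩ ↦ ?_⟩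
    have hab : a ≤ b := hax.trans hxb
    exact hS _ _ _ _ ha hb hab.1 hab.2 _ _ hax.1 hxb.1 hax.2 hxb.2
  · intro hS i j m n hij hmn _ _ p q hip hpm hjq hqn
    exact hS.out hij hmn ⟨⟨hip, hjq⟩, ⟨hpm, hqn⟩⟩

theorem stmt_8_general {α : Type*} [Preorder α] {s : Set α} (hs : s.OrdConnected) :
    IsUpperSet (upperClosure s \ s : Set α) := by
  have sdiff_eq : (upperClosure s \ s : Set α) = (upperClosure s).sdiff s := calc
    (upperClosure s \ s : Set α)
      = ↑(upperClosure s) \ (↑(upperClosure s) ∩ ↑(lowerClosure s)) := by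
        rw [hs.upperClosure_inter_lowerClosure]
    _ = ↑(upperClosure s) \ ↑(lowerClosure s) := Set.sdiff_self_inter
    _ = (upperClosure s).sdiff s := ((upperClosure s).coe_sdiff s).symm
  rw [sdiff_eq]
  exact ((upperClosure s).sdiff s).upper

/-- If `𝒮 ⊆ ℤ × ℤ` is a sub-quotient shape, then `H(𝒮) \ 𝒮` is a filtered
shape. -/
theorem stmt_8 (S : Set (ℤ × ℤ)) (hS : IsSubQuotientShape S) :
    IsFilteredShape (filteredHull S \ S) := by
  rw [isFilteredShape_iff_isUpperSet, filteredHull_eq_upperClosure]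
  exact stmt_8_general (isSubQuotientShape_iff_ordConnected.mp hS)
end
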